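/- arXiv:2304.01840 — 2 statements merged into one kernel-verified Lean document; each statement's English description precedes it below -/
import Mathlib

section
/- Fix ν ∈ ℝ and S ⊆ N. The following are equivalent: (i) for every initial state i ∈ N and every feasible pair (x⁰, x¹) for i, Σ_j (R_j − ν) x¹_j ≤ f_i^S − ν g_i^S; (ii) ν_j^S ≤ ν for all j ∉ S and ν ≤ ν_j^S for all j ∈ S. (Proposition 4: necessary and sufficient optimality test for the S-active solution of the parametric LP, for every initial state.) -/
open Matrix BigOperators
open scoped Classical

noncomputable section

/-- Transition matrix of the `S`-active policy: row `i` of `P` if `i ∈ S`,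
the `i`-th standard unit row otherwise. -/
def PAct {N : Type*} [DecidableEq N] (P : Matrix N N ℝ) (S : Finset N) : Matrix N N ℝ :=
  fun i j => if i ∈ S then P i j else if i = j then 1 else 0

/-- Transition matrix of the `Sᶜ`-active policy. -/
def PPas {N : Type*} [DecidableEq N] (P : Matrix N N ℝ) (S : Finset N) : Matrix N N ℝ :=
  fun i j => if i ∈ S then (if i = j then 1 else 0) else P i j

/-- Basis matrix `B^S = I - β P^S`. -/
def BMat {N : Type*} [Fintype N] [DecidableEq N] (β : ℝ) (P : Matrix N N ℝ) (S : Finset N) :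
    Matrix N N ℝ := 1 - β • PAct P S

/-- Non-basic matrix `N^S = I - β P^{Sᶜ}`. -/
def NMat {N : Type*} [Fintype N] [DecidableEq N] (β : ℝ) (P : Matrix N N ℝ) (S : Finset N) :
    Matrix N N ℝ := 1 - β • PPas P S

/-- Basis inverse `H^S = (B^S)⁻¹`. -/
def HMat {N : Type*} [Fintype N] [DecidableEq N] (β : ℝ) (P : Matrix N N ℝ) (S : Finset N) :
    Matrix N N ℝ := (BMat β P S)⁻¹

/-- Tableau matrix `A^S = N^S · H^S`. -/
def AMat {N : Type*} [Fintype N] [DecidableEq N] (β : ℝ) (P : Matrix N N ℝ) (S : Finset N) :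
    Matrix N N ℝ := NMat β P S * HMat β P S

/-- Work measure `g^S = H^S · 1_S`. -/
def gWork {N : Type*} [Fintype N] [DecidableEq N] (β : ℝ) (P : Matrix N N ℝ) (S : Finset N) :
    N → ℝ := (HMat β P S).mulVec (fun j => if j ∈ S then 1 else 0)

/-- Reward measure `f^S = H^S · (R·1_S)`. -/
def fRew {N : Type*} [Fintype N] [DecidableEq N] (β : ℝ) (P : Matrix N N ℝ) (R : N → ℝ)
    (S : Finset N) : N → ℝ := (HMat β P S).mulVec (fun j => if j ∈ S then R j else 0)

/-- Marginal work `w_i^S`. -/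
def wMarg {N : Type*} [Fintype N] [DecidableEq N] (β : ℝ) (P : Matrix N N ℝ) (S : Finset N)
    (i : N) : ℝ :=
  if i ∈ S then (1 - β) * gWork β P S i
  else 1 + β * ∑ j ∈ S, P i j * gWork β P S j

/-- Marginal reward `r_i^S`. -/
def rMarg {N : Type*} [Fintype N] [DecidableEq N] (β : ℝ) (P : Matrix N N ℝ) (R : N → ℝ)
    (S : Finset N) (i : N) : ℝ :=
  if i ∈ S then (1 - β) * fRew β P R S i
  else R i + β * ∑ j ∈ S, P i j * fRew β P R S j

/-- Marginal productivity rate `ν_i^S = r_i^S / w_i^S`. -/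
def nuMarg {N : Type*} [Fintype N] [DecidableEq N] (β : ℝ) (P : Matrix N N ℝ) (R : N → ℝ)
    (S : Finset N) (i : N) : ℝ := rMarg β P R S i / wMarg β P S i

/-- Feasibility of a pair of row vectors `(x⁰, x¹)` for initial state `i`:
`x⁰, x¹ ≥ 0` and `(1-β) x⁰ + x¹ (I - β P) = e_i`. -/
def Feasible {N : Type*} [Fintype N] [DecidableEq N] (β : ℝ) (P : Matrix N N ℝ) (i : N)
    (x0 x1 : N → ℝ) : Prop :=
  (∀ j, 0 ≤ x0 j) ∧ (∀ j, 0 ≤ x1 j) ∧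
    (1 - β) • x0 + Matrix.vecMul x1 (1 - β • P) = Pi.single i 1

/-- Modified reward vector `R̂ = R - (I - βP)·Q`. -/
def Rhat {N : Type*} [Fintype N] [DecidableEq N] (β : ℝ) (P : Matrix N N ℝ) (R Q : N → ℝ) :
    N → ℝ := fun i => R i - ((1 - β • P).mulVec Q) i

/-!
Since the work measures are the reward measures for `R = 1`, everything is linear in the reward
vector and the parametric problem reduces to `ν = 0` with rewards `R - ν`. Put `f = f^S` and
`r = r^S`. Then `(1 - β) f` is `r` on `S` and `0` off `S`, while `R - (I - βP) f` is `0` on `S` and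
`r` off `S`. Pairing `f` with the constraint `(1 - β) x⁰ + x¹ (I - βP) = e_i` therefore gives the
suboptimality gap of a feasible pair,
`f_i - x¹ · R = ∑_{j ∈ S} x⁰_j r_j - ∑_{j ∉ S} x¹_j r_j`.
It is nonnegative when the marginal rewards have the right signs. Conversely, for `j ∈ S` staying
passive at `j` forever has gap `r_j / (1 - β)`, and for `j ∉ S` being active at `j` once and
`S`-active afterwards has gap `-r_j`.
-/

section MonotoneMatrix

/-- Monotone matrices in the sense of Collatz: those with `0 ≤ A v → 0 ≤ v`, equivalently (over a
field) the invertible ones with entrywise nonnegative inverse. The basis matrices `B^S` are of this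
kind. -/
def IsMonotoneMatrix {n K : Type*} [Fintype n] [NonUnitalNonAssocSemiring K] [LE K]
    (A : Matrix n n K) : Prop :=
  ∀ v, 0 ≤ A *ᵥ v → 0 ≤ v

theorem isMonotoneMatrix_of_offDiag_nonpos_of_sum_pos {n K : Type*} [Fintype n] [Ring K]
    [LinearOrder K] [IsStrictOrderedRing K] {A : Matrix n n K}
    (hoff : ∀ i j, i ≠ j → A i j ≤ 0) (hsum : ∀ i, 0 < ∑ j, A i j) : IsMonotoneMatrix A := by
  intro v hv i
  have : Nonempty n := ⟨i⟩
  obtain ⟨m, hm⟩ := Finite.exists_min v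
  have hAm : 0 ≤ (∑ j, A m j) * v m :=
    calc 0 ≤ ∑ j, A m j * v j := hv m
      _ ≤ ∑ j, A m j * v m := Finset.sum_le_sum fun j _ ↦ by
        obtain rfl | hne := eq_or_ne m j
        · rfl
        · exact mul_le_mul_of_nonpos_left (hm j) (hoff m j hne)
      _ = (∑ j, A m j) * v m := (Finset.sum_mul ..).symm
  exact (nonneg_of_mul_nonneg_right hAm (hsum m)).trans (hm i)

variable {n K : Type*} [Fintype n] [DecidableEq n] [Field K] [LinearOrder K]
  [IsStrictOrderedRing K] {A : Matrix n n K}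

theorem IsMonotoneMatrix.isUnit (hA : IsMonotoneMatrix A) : IsUnit A := by
  refine mulVec_injective_iff_isUnit.mp fun v w hvw ↦ ?_
  have hle : ∀ {v w : n → K}, A *ᵥ v = A *ᵥ w → v ≤ w := fun {v w} h ↦
    sub_nonneg.mp (hA _ (by rw [mulVec_sub, h, sub_self]))
  exact (hle hvw).antisymm (hle hvw.symm)

theorem IsMonotoneMatrix.inv_mulVec_nonneg (hA : IsMonotoneMatrix A) {b : n → K} (hb : 0 ≤ b) :
    0 ≤ A⁻¹ *ᵥ b := by
  refine hA _ ?_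
  rwa [mulVec_mulVec, mul_nonsing_inv _ ((isUnit_iff_isUnit_det A).mp hA.isUnit), one_mulVec]

theorem IsMonotoneMatrix.vecMul_inv_nonneg (hA : IsMonotoneMatrix A) {b : n → K} (hb : 0 ≤ b) :
    0 ≤ b ᵥ* A⁻¹ := by
  intro j
  have hcol : 0 ≤ A⁻¹ *ᵥ Pi.single j 1 := hA.inv_mulVec_nonneg (Pi.single_nonneg.mpr zero_le_one)
  rw [mulVec_single_one] at hcol
  exact dotProduct_nonneg_of_nonneg hb hcol

end MonotoneMatrix

theorem piecewise_dotProduct_compl_piecewise {n K : Type*} [Fintype n] [DecidableEq n]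
    [NonUnitalNonAssocSemiring K] (S : Finset n) (x y : n → K) :
    S.piecewise x 0 ⬝ᵥ Sᶜ.piecewise y 0 = 0 :=
  Finset.sum_eq_zero fun j _ ↦ by by_cases hj : j ∈ S <;> simp [hj]

theorem one_sub_smul_mulVec_apply {n K : Type*} [Fintype n] [DecidableEq n] [Ring K]
    (b : K) (A : Matrix n n K) (v : n → K) (i : n) :
    ((1 - b • A) *ᵥ v) i = v i - b * ∑ j, A i j * v j := by
  rw [sub_mulVec, one_mulVec, smul_mulVec]
  rfl

section ActiveSet

variable {N : Type*} [Fintype N] [DecidableEq N] {β : ℝ} {P : Matrix N N ℝ} {S : Finset N}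

theorem BMat_apply_of_mem {i : N} (hi : i ∈ S) : BMat β P S i = (1 - β • P) i := by
  ext j
  simp [BMat, PAct, hi]

theorem BMat_apply_of_notMem {i : N} (hi : i ∉ S) : BMat β P S i = Pi.single i (1 - β) := by
  ext j
  obtain rfl | hij := eq_or_ne i j
  · simp [BMat, PAct, hi]
  · simp [BMat, PAct, hi, hij, hij.symm]

theorem BMat_mulVec_of_mem (v : N → ℝ) {i : N} (hi : i ∈ S) :
    (BMat β P S *ᵥ v) i = ((1 - β • P) *ᵥ v) i :=
  congrArg (· ⬝ᵥ v) (BMat_apply_of_mem hi)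

theorem BMat_mulVec_of_notMem (v : N → ℝ) {i : N} (hi : i ∉ S) :
    (BMat β P S *ᵥ v) i = (1 - β) * v i :=
  (congrArg (· ⬝ᵥ v) (BMat_apply_of_notMem hi)).trans (single_dotProduct v (1 - β) i)

theorem vecMul_BMat (y : N → ℝ) :
    y ᵥ* BMat β P S = (1 - β) • Sᶜ.piecewise y 0 + S.piecewise y 0 ᵥ* (1 - β • P) := by
  rw [← vecMul_one ((1 - β) • Sᶜ.piecewise y 0)]
  simp only [vecMul_eq_sum, ← Finset.sum_add_distrib]
  refine Finset.sum_congr rfl fun k _ ↦ ?_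
  by_cases hk : k ∈ S
  · simp [hk, BMat_apply_of_mem hk]
  · ext l
    simp [hk, BMat_apply_of_notMem hk, one_apply, Pi.single_apply, eq_comm, mul_comm]

theorem isMonotoneMatrix_BMat (hP0 : ∀ i j, 0 ≤ P i j) (hP1 : ∀ i, ∑ j, P i j ≤ 1)
    (hβ0 : 0 ≤ β) (hβ1 : β < 1) (S : Finset N) : IsMonotoneMatrix (BMat β P S) := by
  refine isMonotoneMatrix_of_offDiag_nonpos_of_sum_pos (fun i j hij ↦ ?_) fun i ↦ ?_
  · by_cases hi : i ∈ S
    · simpa [BMat_apply_of_mem hi, hij] using mul_nonneg hβ0 (hP0 i j)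
    · simp [BMat_apply_of_notMem hi, hij.symm]
  · by_cases hi : i ∈ S
    · have hsum : ∑ j, BMat β P S i j = 1 - β * ∑ j, P i j := by
        simp [BMat_apply_of_mem hi, one_apply, Finset.mul_sum]
      rw [hsum]
      linarith [mul_le_of_le_one_right hβ0 (hP1 i)]
    · simpa [BMat_apply_of_notMem hi] using hβ1

section RewardMeasure

variable {R : N → ℝ}

theorem fRew_eq_HMat_mulVec : fRew β P R S = HMat β P S *ᵥ S.piecewise R 0 :=
  rfl

theorem BMat_mulVec_fRew (hB : IsUnit (BMat β P S)) :
    BMat β P S *ᵥ fRew β P R S = S.piecewise R 0 := by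
  rw [fRew_eq_HMat_mulVec, HMat, mulVec_mulVec,
    mul_nonsing_inv _ ((isUnit_iff_isUnit_det _).mp hB), one_mulVec]

theorem fRew_of_mem (hB : IsUnit (BMat β P S)) {i : N} (hi : i ∈ S) :
    fRew β P R S i = R i + β * ∑ j, P i j * fRew β P R S j := by
  have hBi := congrFun (BMat_mulVec_fRew (R := R) hB) i
  rw [BMat_mulVec_of_mem _ hi, one_sub_smul_mulVec_apply, S.piecewise_eq_of_mem _ _ hi] at hBi
  exact sub_eq_iff_eq_add.mp hBi

theorem fRew_of_notMem (hB : IsUnit (BMat β P S)) (hβ : β ≠ 1) {i : N} (hi : i ∉ S) :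
    fRew β P R S i = 0 := by
  have hBi := congrFun (BMat_mulVec_fRew (R := R) hB) i
  rw [BMat_mulVec_of_notMem _ hi, S.piecewise_eq_of_notMem _ _ hi] at hBi
  exact (mul_eq_zero.mp hBi).resolve_left (sub_ne_zero.mpr hβ.symm)

theorem rMarg_of_mem {i : N} (hi : i ∈ S) : rMarg β P R S i = (1 - β) * fRew β P R S i :=
  if_pos hi

theorem rMarg_of_notMem (hB : IsUnit (BMat β P S)) (hβ : β ≠ 1) {i : N} (hi : i ∉ S) :
    rMarg β P R S i = R i + β * ∑ j, P i j * fRew β P R S j := by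
  have hsum : ∑ j ∈ S, P i j * fRew β P R S j = ∑ j, P i j * fRew β P R S j :=
    Finset.sum_subset S.subset_univ fun j _ hj ↦ by rw [fRew_of_notMem hB hβ hj, mul_zero]
  rw [rMarg, if_neg hi, hsum]

theorem one_sub_smul_fRew (hB : IsUnit (BMat β P S)) (hβ : β ≠ 1) :
    (1 - β) • fRew β P R S = S.piecewise (rMarg β P R S) 0 := by
  ext i
  by_cases hi : i ∈ S
  · simp [hi, rMarg_of_mem hi]
  · simp [hi, fRew_of_notMem hB hβ hi]

theorem one_sub_smul_mulVec_fRew (hB : IsUnit (BMat β P S)) (hβ : β ≠ 1) :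
    (1 - β • P) *ᵥ fRew β P R S = R - Sᶜ.piecewise (rMarg β P R S) 0 := by
  ext i
  rw [one_sub_smul_mulVec_apply]
  by_cases hi : i ∈ S
  · simp [hi, fRew_of_mem hB hi]
  · simp [hi, fRew_of_notMem hB hβ hi, rMarg_of_notMem hB hβ hi]

theorem fRew_nonneg (hB : IsMonotoneMatrix (BMat β P S)) (hR : 0 ≤ R) : 0 ≤ fRew β P R S :=
  hB.inv_mulVec_nonneg (S.le_piecewise_of_le_of_le hR le_rfl)

theorem rMarg_pos (hP0 : ∀ i j, 0 ≤ P i j) (hβ0 : 0 ≤ β) (hβ1 : β < 1)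
    (hB : IsMonotoneMatrix (BMat β P S)) (hR : ∀ i, 0 < R i) (i : N) : 0 < rMarg β P R S i := by
  have hcont : 0 < R i + β * ∑ j, P i j * fRew β P R S j :=
    add_pos_of_pos_of_nonneg (hR i) <| mul_nonneg hβ0 <| Finset.sum_nonneg fun j _ ↦
      mul_nonneg (hP0 i j) (fRew_nonneg hB (fun k ↦ (hR k).le) j)
  by_cases hi : i ∈ S
  · rw [rMarg_of_mem hi, fRew_of_mem hB.isUnit hi]
    exact mul_pos (sub_pos.mpr hβ1) hcont
  · rwa [rMarg_of_notMem hB.isUnit hβ1.ne hi]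

end RewardMeasure

theorem gWork_eq_fRew_one : gWork β P S = fRew β P 1 S :=
  rfl

theorem wMarg_eq_rMarg_one : wMarg β P S = rMarg β P 1 S :=
  rfl

theorem fRew_sub_smul (R Q : N → ℝ) (ν : ℝ) :
    fRew β P (R - ν • Q) S = fRew β P R S - ν • fRew β P Q S := by
  have hpiece : S.piecewise (R - ν • Q) 0 = S.piecewise R 0 - ν • S.piecewise Q 0 := by
    ext i
    by_cases hi : i ∈ S <;> simp [hi]
  simp only [fRew_eq_HMat_mulVec, hpiece, mulVec_sub, mulVec_smul]

theorem rMarg_sub_smul (R Q : N → ℝ) (ν : ℝ) :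
    rMarg β P (R - ν • Q) S = rMarg β P R S - ν • rMarg β P Q S := by
  ext i
  by_cases hi : i ∈ S
  · simp only [rMarg, hi, if_true, fRew_sub_smul, Pi.sub_apply, Pi.smul_apply, smul_eq_mul]
    ring
  · simp only [rMarg, hi, if_false, fRew_sub_smul, Pi.sub_apply, Pi.smul_apply, smul_eq_mul,
      mul_sub, Finset.sum_sub_distrib, mul_left_comm _ ν, ← Finset.mul_sum]
    ring

theorem nuMarg_le_iff {R : N → ℝ} {ν : ℝ} {i : N} (hw : 0 < wMarg β P S i) :
    nuMarg β P R S i ≤ ν ↔ rMarg β P (R - ν • 1) S i ≤ 0 := by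
  rw [nuMarg, div_le_iff₀ hw, rMarg_sub_smul, ← wMarg_eq_rMarg_one]
  exact sub_nonpos.symm

theorem le_nuMarg_iff {R : N → ℝ} {ν : ℝ} {i : N} (hw : 0 < wMarg β P S i) :
    ν ≤ nuMarg β P R S i ↔ 0 ≤ rMarg β P (R - ν • 1) S i := by
  rw [nuMarg, le_div_iff₀ hw, rMarg_sub_smul, ← wMarg_eq_rMarg_one]
  exact sub_nonneg.symm

theorem feasible_single_zero (hβ1 : β < 1) (j : N) :
    Feasible β P j (Pi.single j (1 - β)⁻¹) 0 := by
  have hβ : 0 < 1 - β := sub_pos.mpr hβ1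
  have hx0 : (0 : N → ℝ) ≤ Pi.single j (1 - β)⁻¹ :=
    Pi.single_nonneg.mpr (inv_nonneg.mpr hβ.le)
  refine ⟨hx0, fun _ ↦ le_rfl, ?_⟩
  rw [zero_vecMul, add_zero, ← Pi.single_smul, smul_eq_mul, mul_inv_cancel₀ hβ.ne']

/-- Discounted occupation measure `β P_j H^S` of the periods after the first one, when the chain
starts in `j`, is active in the first period and follows the `S`-active policy afterwards. -/
def deviationOccupation (β : ℝ) (P : Matrix N N ℝ) (S : Finset N) (j : N) : N → ℝ :=
  (β • P j) ᵥ* HMat β P S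

theorem deviationOccupation_nonneg (hP0 : ∀ i j, 0 ≤ P i j) (hβ0 : 0 ≤ β)
    (hB : IsMonotoneMatrix (BMat β P S)) (j : N) : 0 ≤ deviationOccupation β P S j :=
  hB.vecMul_inv_nonneg (smul_nonneg hβ0 (hP0 j))

theorem deviationOccupation_vecMul_BMat (hB : IsUnit (BMat β P S)) (j : N) :
    deviationOccupation β P S j ᵥ* BMat β P S = β • P j := by
  rw [deviationOccupation, HMat, vecMul_vecMul,
    nonsing_inv_mul _ ((isUnit_iff_isUnit_det _).mp hB), vecMul_one]

theorem feasible_deviation (hP0 : ∀ i j, 0 ≤ P i j) (hβ0 : 0 ≤ β)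
    (hB : IsMonotoneMatrix (BMat β P S)) (j : N) :
    Feasible β P j (Sᶜ.piecewise (deviationOccupation β P S j) 0)
      (Pi.single j 1 + S.piecewise (deviationOccupation β P S j) 0) := by
  have hy := deviationOccupation_nonneg hP0 hβ0 hB j
  refine ⟨Sᶜ.le_piecewise_of_le_of_le hy le_rfl,
    add_nonneg (Pi.single_nonneg.mpr zero_le_one) (S.le_piecewise_of_le_of_le hy le_rfl), ?_⟩
  rw [add_vecMul, add_left_comm, ← vecMul_BMat, deviationOccupation_vecMul_BMat hB.isUnit,
    single_one_vecMul]
  ext l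
  simp [one_apply, Pi.single_apply, eq_comm]

theorem Feasible.fRew_sub_dotProduct {R x0 x1 : N → ℝ} {i : N} (hx : Feasible β P i x0 x1)
    (hB : IsUnit (BMat β P S)) (hβ : β ≠ 1) :
    fRew β P R S i - R ⬝ᵥ x1 =
      x0 ⬝ᵥ S.piecewise (rMarg β P R S) 0 - x1 ⬝ᵥ Sᶜ.piecewise (rMarg β P R S) 0 := by
  have hpair : fRew β P R S i =
      x0 ⬝ᵥ ((1 - β) • fRew β P R S) + x1 ⬝ᵥ ((1 - β • P) *ᵥ fRew β P R S) := by
    rw [dotProduct_mulVec, dotProduct_smul, ← smul_dotProduct, ← add_dotProduct, hx.2.2,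
      single_one_dotProduct]
  rw [hpair, one_sub_smul_fRew hB hβ, one_sub_smul_mulVec_fRew hB hβ, dotProduct_sub,
    dotProduct_comm R]
  ring

theorem forall_feasible_dotProduct_le_fRew_iff (hP0 : ∀ i j, 0 ≤ P i j) (hβ0 : 0 ≤ β)
    (hβ1 : β < 1) (hB : IsMonotoneMatrix (BMat β P S)) (R : N → ℝ) :
    (∀ i x0 x1, Feasible β P i x0 x1 → R ⬝ᵥ x1 ≤ fRew β P R S i) ↔
      (∀ j ∉ S, rMarg β P R S j ≤ 0) ∧ ∀ j ∈ S, 0 ≤ rMarg β P R S j := by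
  have hgap {i x0 x1} (hx : Feasible β P i x0 x1) : R ⬝ᵥ x1 ≤ fRew β P R S i ↔
      x1 ⬝ᵥ Sᶜ.piecewise (rMarg β P R S) 0 ≤ x0 ⬝ᵥ S.piecewise (rMarg β P R S) 0 := by
    rw [← sub_nonneg, hx.fRew_sub_dotProduct hB.isUnit hβ1.ne, sub_nonneg]
  refine ⟨fun h ↦ ⟨fun j hj ↦ ?_, fun j hj ↦ ?_⟩, fun ⟨hout, hin⟩ i x0 x1 hx ↦ ?_⟩
  · have hdev := feasible_deviation hP0 hβ0 hB j
    have hle := (hgap hdev).mp (h j _ _ hdev)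
    rwa [dotProduct_comm (Sᶜ.piecewise _ 0), add_dotProduct, single_one_dotProduct,
      piecewise_dotProduct_compl_piecewise, piecewise_dotProduct_compl_piecewise, add_zero,
      Sᶜ.piecewise_eq_of_mem _ _ (Finset.mem_compl.mpr hj)] at hle
  · have hpassive := feasible_single_zero (P := P) hβ1 j
    have hle := (hgap hpassive).mp (h j _ _ hpassive)
    rw [zero_dotProduct, single_dotProduct, S.piecewise_eq_of_mem _ _ hj] at hle
    exact nonneg_of_mul_nonneg_right hle (inv_pos.mpr (sub_pos.mpr hβ1))
  · rw [hgap hx]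
    have hS : 0 ≤ S.piecewise (rMarg β P R S) 0 := fun j ↦ by
      by_cases hj : j ∈ S <;> simp [hj, hin]
    have hSc : Sᶜ.piecewise (rMarg β P R S) 0 ≤ 0 := fun j ↦ by
      by_cases hj : j ∈ S <;> simp [hj, hout]
    calc x1 ⬝ᵥ Sᶜ.piecewise (rMarg β P R S) 0 ≤ x1 ⬝ᵥ 0 :=
          dotProduct_le_dotProduct_of_nonneg_left hSc hx.2.1
      _ = 0 := dotProduct_zero x1
      _ ≤ x0 ⬝ᵥ S.piecewise (rMarg β P R S) 0 := dotProduct_nonneg_of_nonneg hx.1 hS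

theorem stmt3_general (hP0 : ∀ i j, 0 ≤ P i j) (hP1 : ∀ i, ∑ j, P i j ≤ 1)
    (hβ0 : 0 ≤ β) (hβ1 : β < 1) (R : N → ℝ) (ν : ℝ) (S : Finset N) :
    (∀ i : N, ∀ x0 x1 : N → ℝ, Feasible β P i x0 x1 →
        ∑ j, (R j - ν) * x1 j ≤ fRew β P R S i - ν * gWork β P S i) ↔
      ((∀ j ∉ S, nuMarg β P R S j ≤ ν) ∧ (∀ j ∈ S, ν ≤ nuMarg β P R S j)) := by
  have hB := isMonotoneMatrix_BMat hP0 hP1 hβ0 hβ1 S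
  have hw : ∀ j, 0 < wMarg β P S j := rMarg_pos hP0 hβ0 hβ1 hB fun _ ↦ zero_lt_one
  have hobj (x1 : N → ℝ) : ∑ j, (R j - ν) * x1 j = (R - ν • 1) ⬝ᵥ x1 := by
    simp [dotProduct]
  have hval (i : N) : fRew β P R S i - ν * gWork β P S i = fRew β P (R - ν • 1) S i := by
    rw [fRew_sub_smul, gWork_eq_fRew_one]
    rfl
  simp only [hobj, hval, nuMarg_le_iff (hw _), le_nuMarg_iff (hw _)]
  exact forall_feasible_dotProduct_le_fRew_iff hP0 hβ0 hβ1 hB (R - ν • 1)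

end ActiveSet

/-- Proposition 4: necessary and sufficient optimality test for the
S-active solution of the parametric LP, for every initial state. -/
theorem stmt3 {N : Type*} [Fintype N] [DecidableEq N] [Nonempty N]
    (P : Matrix N N ℝ) (hP0 : ∀ i j, 0 ≤ P i j) (hP1 : ∀ i, ∑ j, P i j = 1)
    (β : ℝ) (hβ0 : 0 < β) (hβ1 : β < 1)
    (R : N → ℝ) (ν : ℝ) (S : Finset N) :
    (∀ i : N, ∀ x0 x1 : N → ℝ, Feasible β P i x0 x1 →
        ∑ j, (R j - ν) * x1 j ≤ fRew β P R S i - ν * gWork β P S i) ↔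
      ((∀ j ∉ S, nuMarg β P R S j ≤ ν) ∧ (∀ j ∈ S, ν ≤ nuMarg β P R S j)) :=
  stmt3_general hP0 (fun i ↦ (hP1 i).le) hβ0.le hβ1 R ν S
end
end

section
/- Fix S ⊆ N. For every i ∈ S, w_i^S = Σ_{j∈S} A^S_{ij}, and for every i ∉ S, w_i^S = 1 − Σ_{j∈S} A^S_{ij}. (The marginal workloads are the reduced costs of the work LP, equation (12) of the paper.) -/
open Matrix BigOperators
open scoped Classical

noncomputable section

/-!
Since `g = H 1_S`, the row sums of `A = N H` over `S` are the entries of `N g`. Row `i` of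
`I - β Q` is `1 - β` times the standard unit row whenever row `i` of `Q` is the unit row: this
happens in `N` for `i ∈ S`, and in `B` for `i ∉ S`. In the first case `(N g)_i = (1 - β) g_i`.
In the second, `B g = 1_S` says `(1 - β) g_i = 0`, where `1 - β ≠ 0` because `B` is invertible;
so `g` is supported on `S` and `(N g)_i = -β ∑_{j ∈ S} P_ij g_j`.
-/

section Discount

variable {R n : Type*} [Ring R] [Fintype n] [DecidableEq n]

theorem one_sub_smul_mulVec_apply_s7 (β : R) (M : Matrix n n R) (v : n → R) (i : n) :
    ((1 - β • M) *ᵥ v) i = v i - β * (M *ᵥ v) i := by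
  rw [sub_mulVec, one_mulVec, smul_mulVec, Pi.sub_apply, Pi.smul_apply, smul_eq_mul]

theorem one_sub_smul_mulVec_apply_of_row_eq_single {M : Matrix n n R} {i : n}
    (hM : M i = Pi.single i 1) (β : R) (v : n → R) :
    ((1 - β • M) *ᵥ v) i = (1 - β) * v i := by
  rw [one_sub_smul_mulVec_apply_s7, mulVec, hM, single_one_dotProduct, sub_mul, one_mul]

end Discount

section RowStochastic

variable {n : Type*} [Fintype n] [DecidableEq n]

attribute [local instance] Matrix.linftyOpNormedRing Matrix.linftyOpNormedAlgebra

theorem linfty_opNorm_le_one_of_mem_rowStochastic {M : Matrix n n ℝ}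
    (hM : M ∈ rowStochastic ℝ n) : ‖M‖ ≤ 1 := by
  rw [← NNReal.coe_one, ← coe_nnnorm, NNReal.coe_le_coe, linfty_opNNNorm_def]
  refine Finset.sup_le fun i _ ↦ NNReal.coe_le_coe.1 ?_
  have h_row : ∑ j, ‖M i j‖ = 1 := by
    simp_rw [Real.norm_of_nonneg (nonneg_of_mem_rowStochastic hM), sum_row_of_mem_rowStochastic hM]
  simpa only [NNReal.coe_sum, coe_nnnorm, NNReal.coe_one] using h_row.le

theorem isUnit_one_sub_smul_of_mem_rowStochastic {M : Matrix n n ℝ} (hM : M ∈ rowStochastic ℝ n)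
    {β : ℝ} (hβ : |β| < 1) : IsUnit (1 - β • M) := by
  refine isUnit_one_sub_of_norm_lt_one ?_
  calc ‖β • M‖ = |β| * ‖M‖ := by rw [norm_smul, Real.norm_eq_abs]
    _ ≤ |β| := mul_le_of_le_one_right (abs_nonneg β) (linfty_opNorm_le_one_of_mem_rowStochastic hM)
    _ < 1 := hβ

end RowStochastic

section TransitionMatrices

variable {N : Type*} [DecidableEq N] {P : Matrix N N ℝ} {S : Finset N} {i : N}

theorem PAct_row_of_mem (hi : i ∈ S) : PAct P S i = P i :=
  funext fun _ ↦ if_pos hi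

theorem PAct_row_of_notMem (hi : i ∉ S) : PAct P S i = Pi.single i 1 := by
  ext j
  simp only [PAct, if_neg hi, Pi.single_apply, eq_comm]

theorem PPas_row_of_mem (hi : i ∈ S) : PPas P S i = Pi.single i 1 := by
  ext j
  simp only [PPas, if_pos hi, Pi.single_apply, eq_comm]

theorem PPas_row_of_notMem (hi : i ∉ S) : PPas P S i = P i :=
  funext fun _ ↦ if_neg hi

theorem PAct_mem_rowStochastic [Fintype N] (hP : P ∈ rowStochastic ℝ N) (S : Finset N) :
    PAct P S ∈ rowStochastic ℝ N := by
  rw [mem_rowStochastic_iff_sum, ← forall_and]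
  intro i
  by_cases hi : i ∈ S
  · rw [PAct_row_of_mem hi]
    exact ⟨fun _ ↦ nonneg_of_mem_rowStochastic hP, sum_row_of_mem_rowStochastic hP i⟩
  · rw [PAct_row_of_notMem hi]
    have h_nonneg : (0 : N → ℝ) ≤ Pi.single i 1 := Pi.single_nonneg.2 zero_le_one
    exact ⟨h_nonneg, Fintype.sum_pi_single' i 1⟩

end TransitionMatrices

section Workload

variable {N : Type*} [Fintype N] [DecidableEq N] {β : ℝ} {P : Matrix N N ℝ} {S : Finset N} {i : N}

theorem isUnit_BMat (hP : P ∈ rowStochastic ℝ N) (hβ : |β| < 1) (S : Finset N) :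
    IsUnit (BMat β P S) :=
  isUnit_one_sub_smul_of_mem_rowStochastic (PAct_mem_rowStochastic hP S) hβ

theorem BMat_mulVec_apply_of_notMem (hi : i ∉ S) (v : N → ℝ) :
    (BMat β P S *ᵥ v) i = (1 - β) * v i :=
  one_sub_smul_mulVec_apply_of_row_eq_single (PAct_row_of_notMem hi) β v

theorem NMat_mulVec_apply_of_mem (hi : i ∈ S) (v : N → ℝ) :
    (NMat β P S *ᵥ v) i = (1 - β) * v i :=
  one_sub_smul_mulVec_apply_of_row_eq_single (PPas_row_of_mem hi) β v

theorem NMat_mulVec_apply_of_notMem (hi : i ∉ S) (v : N → ℝ) :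
    (NMat β P S *ᵥ v) i = v i - β * ∑ j, P i j * v j := by
  rw [NMat, one_sub_smul_mulVec_apply_s7, mulVec, PPas_row_of_notMem hi, dotProduct]

theorem one_sub_mul_HMat_mulVec_apply_of_notMem (hB : IsUnit (BMat β P S)) (hi : i ∉ S)
    (v : N → ℝ) : (1 - β) * (HMat β P S *ᵥ v) i = v i := by
  rw [← BMat_mulVec_apply_of_notMem hi, mulVec_mulVec, HMat,
    mul_nonsing_inv _ ((isUnit_iff_isUnit_det _).1 hB), one_mulVec]

theorem gWork_eq_zero_of_notMem (hB : IsUnit (BMat β P S)) (hi : i ∉ S) : gWork β P S i = 0 := by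
  have hβ : 1 - β ≠ 0 :=
    left_ne_zero_of_mul_eq_one (one_sub_mul_HMat_mulVec_apply_of_notMem hB hi 1)
  have hg : (1 - β) * gWork β P S i = 0 := by
    rw [gWork, one_sub_mul_HMat_mulVec_apply_of_notMem hB hi, if_neg hi]
  exact (mul_eq_zero.1 hg).resolve_left hβ

theorem sum_mul_gWork_eq_sum_mem (hB : IsUnit (BMat β P S)) (v : N → ℝ) :
    ∑ j, v j * gWork β P S j = ∑ j ∈ S, v j * gWork β P S j :=
  (Finset.sum_subset S.subset_univ fun j _ hj ↦ by
    rw [gWork_eq_zero_of_notMem hB hj, mul_zero]).symm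

theorem sum_AMat_eq_NMat_mulVec_gWork (β : ℝ) (P : Matrix N N ℝ) (S : Finset N) (i : N) :
    ∑ j ∈ S, AMat β P S i j = (NMat β P S *ᵥ gWork β P S) i := by
  rw [gWork, mulVec_mulVec, ← AMat]
  simp [mulVec, dotProduct]

theorem wMarg_eq_sum_AMat (hi : i ∈ S) : wMarg β P S i = ∑ j ∈ S, AMat β P S i j := by
  rw [sum_AMat_eq_NMat_mulVec_gWork, NMat_mulVec_apply_of_mem hi, wMarg, if_pos hi]

theorem wMarg_eq_one_sub_sum_AMat (hB : IsUnit (BMat β P S)) (hi : i ∉ S) :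
    wMarg β P S i = 1 - ∑ j ∈ S, AMat β P S i j := by
  rw [sum_AMat_eq_NMat_mulVec_gWork, NMat_mulVec_apply_of_notMem hi, gWork_eq_zero_of_notMem hB hi,
    sum_mul_gWork_eq_sum_mem hB, wMarg, if_neg hi]
  ring

end Workload

theorem stmt7_general {N : Type*} [Fintype N] [DecidableEq N] (P : Matrix N N ℝ) (β : ℝ)
    (S : Finset N) (hB : IsUnit (BMat β P S)) :
    (∀ i ∈ S, wMarg β P S i = ∑ j ∈ S, AMat β P S i j) ∧
    (∀ i ∉ S, wMarg β P S i = 1 - ∑ j ∈ S, AMat β P S i j) :=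
  ⟨fun _ ↦ wMarg_eq_sum_AMat, fun _ ↦ wMarg_eq_one_sub_sum_AMat hB⟩

/-- equation (12): the marginal workloads are the reduced costs of the
work LP. -/
theorem stmt7 {N : Type*} [Fintype N] [DecidableEq N] [Nonempty N]
    (P : Matrix N N ℝ) (hP0 : ∀ i j, 0 ≤ P i j) (hP1 : ∀ i, ∑ j, P i j = 1)
    (β : ℝ) (hβ0 : 0 < β) (hβ1 : β < 1) (S : Finset N) :
    (∀ i ∈ S, wMarg β P S i = ∑ j ∈ S, AMat β P S i j) ∧
    (∀ i ∉ S, wMarg β P S i = 1 - ∑ j ∈ S, AMat β P S i j) :=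
  stmt7_general P β S (isUnit_BMat (mem_rowStochastic_iff_sum.2 ⟨hP0, hP1⟩)
    ((abs_of_pos hβ0).trans_lt hβ1) S)
end
end
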